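/- arXiv:2303.06472 — 2 statements merged into one kernel-verified Lean document; each statement's English description precedes it below -/
import Mathlib

section
/- Let φ be a flow on ℝⁿ and let N be an isolating block with exit set L. For every set U that is open in N and contains N⁻ ∪ L, there exists s₀ > 0 such that for all s', s with s' ≥ s ≥ s₀ one has f_s(N) ⊆ U and there exists a homotopy H : N × [0,1] → U with H(·,0) = f_s, H(·,1) = f_{s'}, and H(x,u) = x for all x ∈ L and u ∈ [0,1]. -/
/-!
The map `f_s` moves a point `x` for the time `T(x, s) = min (s, τ(x))` (`stopTime`), and everything
rests on two facts.

A trajectory that starts in `N` and leaves it does so through `L`, at the exit time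
(`exitTime_spec`), because a boundary point outside `L` is pushed into the interior. Conversely a
trajectory leaves `N` immediately after meeting `L`. Hence `T` is continuous on `N × [0, ∞)`: it is
upper semicontinuous because being outside the closed set `N` is an open condition, and lower
semicontinuous because a compact piece of trajectory missing the closed set `L` still misses it
after a small change of the initial point (`continuousOn_stopTime`). So `(x, s) ↦ f_s(x)` is
continuous, and the homotopy is `H(x, u) = f_{s + u (s' - s)}(x)`.

The set of points of `N ∖ U` whose backward trajectory stays in `N` for time `s` is compact and
decreases with `s`; the intersection over all `s` is `N⁻ ∖ U = ∅`, so it is empty for some `s₀`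
(`exists_backward_exit`). For `s ≥ s₀` a point of `f_s(N)` lies either in `L ⊆ U` or at the end of a
trajectory of length `s` in `N`, hence in `U`.
-/

open Set

/-- A flow on `ℝⁿ`: a continuous map `φ : ℝⁿ × ℝ → ℝⁿ` with `φ (x, 0) = x` and
`φ (φ (x, s), t) = φ (x, s + t)`. -/
structure FlowRn (n : ℕ) where
  toFun : (Fin n → ℝ) → ℝ → (Fin n → ℝ)
  continuous_toFun : Continuous fun p : (Fin n → ℝ) × ℝ => toFun p.1 p.2
  map_zero : ∀ x, toFun x 0 = x
  map_add : ∀ x s t, toFun (toFun x s) t = toFun x (s + t)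

variable {n : ℕ}

/-- A set `M` is invariant if `x ℝ ⊆ M` for every `x ∈ M`. -/
def FlowRn.IsInvariant (φ : FlowRn n) (M : Set (Fin n → ℝ)) : Prop :=
  ∀ x ∈ M, ∀ t : ℝ, φ.toFun x t ∈ M

/-- `N⁺ = {x ∈ N : x [0, ∞) ⊆ N}`. -/
def posAsymptotic (φ : FlowRn n) (N : Set (Fin n → ℝ)) : Set (Fin n → ℝ) :=
  {x ∈ N | ∀ t ≥ (0 : ℝ), φ.toFun x t ∈ N}

/-- `N⁻ = {x ∈ N : x (-∞, 0] ⊆ N}`. -/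
def negAsymptotic (φ : FlowRn n) (N : Set (Fin n → ℝ)) : Set (Fin n → ℝ) :=
  {x ∈ N | ∀ t ≤ (0 : ℝ), φ.toFun x t ∈ N}

/-- The exit time `τ (x) = sup {t ≥ 0 : x [0, t] ⊆ N}` of a point `x ∈ N ∖ N⁺`. -/
noncomputable def exitTime (φ : FlowRn n) (N : Set (Fin n → ℝ)) (x : Fin n → ℝ) : ℝ :=
  sSup {t : ℝ | 0 ≤ t ∧ ∀ u ∈ Icc 0 t, φ.toFun x u ∈ N}

/-- An isolating block `N` (with exit set `L` and entrance set `L'`) for the isolated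
invariant compactum `K`. -/
structure IsolatingBlock (φ : FlowRn n) (K N L L' : Set (Fin n → ℝ)) : Prop where
  compact_N : IsCompact N
  compact_K : IsCompact K
  invariant_K : φ.IsInvariant K
  subset_interior : K ⊆ interior N
  maximal : ∀ M ⊆ N, φ.IsInvariant M → M ⊆ K
  compact_L : IsCompact L
  compact_L' : IsCompact L'
  exit_subset : L ⊆ frontier N
  entrance_subset : L' ⊆ frontier N
  boundary_eq : frontier N = L ∪ L'
  entrance_strict : ∀ x ∈ L', ∃ ε > (0 : ℝ), ∀ t ∈ Ico (-ε) (0 : ℝ), φ.toFun x t ∉ N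
  exit_strict : ∀ x ∈ L, ∃ δ > (0 : ℝ), ∀ t ∈ Ioc (0 : ℝ) δ, φ.toFun x t ∉ N
  exit_from_interior : ∀ x ∈ L, ∃ ε > (0 : ℝ), ∀ t ∈ Ico (-ε) (0 : ℝ), φ.toFun x t ∈ interior N
  enter_to_interior :
    ∀ x ∈ frontier N \ L, ∃ δ > (0 : ℝ), ∀ t ∈ Ioc (0 : ℝ) δ, φ.toFun x t ∈ interior N

open Classical in
/-- The map `f_s : N → N`, `f_s (x) = x s` if `x [0, s] ⊆ N` and `f_s (x) = x τ(x)` otherwise. -/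
noncomputable def flowMap (φ : FlowRn n) (N : Set (Fin n → ℝ)) (s : ℝ) (x : Fin n → ℝ) :
    Fin n → ℝ :=
  if ∀ u ∈ Icc (0 : ℝ) s, φ.toFun x u ∈ N then φ.toFun x s else φ.toFun x (exitTime φ N x)

namespace FlowRn

lemma continuous_time (φ : FlowRn n) (x : Fin n → ℝ) : Continuous fun t => φ.toFun x t :=
  φ.continuous_toFun.comp (by fun_prop : Continuous fun t : ℝ => (x, t))

lemma continuous_space (φ : FlowRn n) (t : ℝ) : Continuous fun x => φ.toFun x t :=
  φ.continuous_toFun.comp (by fun_prop : Continuous fun x : Fin n → ℝ => (x, t))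

end FlowRn

/-- A trajectory from `x ∈ N` that is outside `N` at time `t` stays in `N` up to the exit time,
which precedes `t`, and is then in the exit set. -/
lemma exitTime_spec {φ : FlowRn n} {K N L L' : Set (Fin n → ℝ)}
    (hN : IsolatingBlock φ K N L L') {x : Fin n → ℝ} (hx : x ∈ N) {t : ℝ} (ht : 0 ≤ t)
    (hxt : φ.toFun x t ∉ N) :
    0 ≤ exitTime φ N x ∧ exitTime φ N x < t ∧
      (∀ u ∈ Icc 0 (exitTime φ N x), φ.toFun x u ∈ N) ∧ φ.toFun x (exitTime φ N x) ∈ L := by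
  have hcl : IsClosed N := hN.compact_N.isClosed
  set A : Set ℝ := {t : ℝ | 0 ≤ t ∧ ∀ u ∈ Icc 0 t, φ.toFun x u ∈ N} with hA
  have hrA : exitTime φ N x = sSup A := rfl
  have h0 : (0 : ℝ) ∈ A := by
    refine ⟨le_rfl, fun u hu => ?_⟩
    obtain rfl : u = 0 := le_antisymm hu.2 hu.1
    rwa [φ.map_zero]
  have hub : ∀ a ∈ A, a ≤ t := by
    intro a ha
    by_contra h
    exact hxt (ha.2 t ⟨ht, (not_le.1 h).le⟩)
  have hbdd : BddAbove A := ⟨t, hub⟩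
  -- Rescaling `[0, t]` to `[0, 1]` exhibits `A` as an intersection of closed sets.
  have hAeq : A = Ici 0 ∩ ⋂ v ∈ Icc (0 : ℝ) 1, {t | φ.toFun x (v * t) ∈ N} := by
    ext a
    simp only [hA, mem_ofPred_eq, mem_inter_iff, mem_Ici, mem_iInter]
    refine and_congr_right fun ha => ⟨fun h v hv => h _ ⟨mul_nonneg hv.1 ha, ?_⟩, fun h u hu => ?_⟩
    · exact mul_le_of_le_one_left ha hv.2
    · rcases ha.eq_or_lt with rfl | ha'
      · obtain rfl : u = 0 := le_antisymm hu.2 hu.1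
        simpa using h 0 ⟨le_rfl, zero_le_one⟩
      · have := h (u / a) ⟨div_nonneg hu.1 ha, (div_le_one ha').2 hu.2⟩
        rwa [div_mul_cancel₀ _ ha'.ne'] at this
  have hAcl : IsClosed A := by
    rw [hAeq]
    refine isClosed_Ici.inter (isClosed_biInter fun v _ => ?_)
    exact hcl.preimage ((φ.continuous_time x).comp (continuous_const.mul continuous_id))
  rw [hrA]
  have hr : sSup A ∈ A := hAcl.csSup_mem ⟨0, h0⟩ hbdd
  set r := sSup A
  have hrN : φ.toFun x r ∈ N := hr.2 r ⟨hr.1, le_rfl⟩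
  refine ⟨hr.1, lt_of_le_of_ne (hub r hr) (fun h => hxt (h ▸ hrN)), hr.2, ?_⟩
  by_contra hL
  have key : ∃ δ > (0 : ℝ), ∀ t ∈ Ioc (0 : ℝ) δ, φ.toFun (φ.toFun x r) t ∈ N := by
    by_cases hi : φ.toFun x r ∈ interior N
    · have : ∀ᶠ t in nhds (0 : ℝ), φ.toFun (φ.toFun x r) t ∈ interior N := by
        refine (φ.continuous_time _).continuousAt.eventually (isOpen_interior.mem_nhds ?_)
        simpa only [φ.map_zero] using hi
      obtain ⟨δ, hδ, h⟩ := Metric.eventually_nhds_iff.1 this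
      refine ⟨δ / 2, by linarith, fun t ht => interior_subset (h ?_)⟩
      rw [Real.dist_eq, sub_zero, abs_of_pos ht.1]
      linarith [ht.2]
    · have hf : φ.toFun x r ∈ frontier N := by
        rw [hcl.frontier_eq]; exact ⟨hrN, hi⟩
      obtain ⟨δ, hδ, h⟩ := hN.enter_to_interior _ ⟨hf, hL⟩
      exact ⟨δ, hδ, fun t ht => interior_subset (h t ht)⟩
  obtain ⟨δ, hδ, h⟩ := key
  have : r + δ ∈ A := by
    refine ⟨by linarith [hr.1], fun u hu => ?_⟩
    rcases le_or_gt u r with hur | hur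
    · exact hr.2 u ⟨hu.1, hur⟩
    · have := h (u - r) ⟨by linarith, by linarith [hu.2]⟩
      rwa [φ.map_add, add_sub_cancel] at this
  linarith [le_csSup hbdd this]

open Classical in
/-- The time `T(x, s)` for which `f_s` moves `x` along the flow: `s` if `x[0, s] ⊆ N`, and the exit
time of `x` otherwise. -/
noncomputable def stopTime (φ : FlowRn n) (N : Set (Fin n → ℝ)) (x : Fin n → ℝ) (s : ℝ) : ℝ :=
  if ∀ u ∈ Icc (0 : ℝ) s, φ.toFun x u ∈ N then s else exitTime φ N x

lemma flowMap_eq (φ : FlowRn n) (N : Set (Fin n → ℝ)) (s : ℝ) (x : Fin n → ℝ) :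
    flowMap φ N s x = φ.toFun x (stopTime φ N x s) := by
  unfold flowMap stopTime
  split_ifs <;> rfl

lemma stopTime_spec {φ : FlowRn n} {K N L L' : Set (Fin n → ℝ)}
    (hN : IsolatingBlock φ K N L L') {x : Fin n → ℝ} (hx : x ∈ N) {s : ℝ} (hs : 0 ≤ s) :
    0 ≤ stopTime φ N x s ∧ stopTime φ N x s ≤ s ∧
      (∀ u ∈ Icc 0 (stopTime φ N x s), φ.toFun x u ∈ N) ∧
      (stopTime φ N x s < s → φ.toFun x (stopTime φ N x s) ∈ L) := by
  unfold stopTime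
  split_ifs with h
  · exact ⟨hs, le_rfl, h, fun h => absurd h (lt_irrefl _)⟩
  · push Not at h
    obtain ⟨t, ht, hxt⟩ := h
    obtain ⟨h1, h2, h3, h4⟩ := exitTime_spec hN hx ht.1 hxt
    exact ⟨h1, h2.le.trans ht.2, h3, fun _ => h4⟩

lemma notMem_exit_of_lt_stopTime {φ : FlowRn n} {K N L L' : Set (Fin n → ℝ)}
    (hN : IsolatingBlock φ K N L L') {x : Fin n → ℝ} (hx : x ∈ N) {s : ℝ} (hs : 0 ≤ s) {u : ℝ}
    (hu : 0 ≤ u) (hus : u < stopTime φ N x s) : φ.toFun x u ∉ L := by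
  intro hL
  obtain ⟨δ, hδ, h⟩ := hN.exit_strict _ hL
  have hpos : 0 < min δ (stopTime φ N x s - u) := lt_min hδ (by linarith)
  refine h _ ⟨hpos, min_le_left _ _⟩ ?_
  rw [φ.map_add]
  exact (stopTime_spec hN hx hs).2.2.1 _
    ⟨by linarith, by linarith [min_le_right δ (stopTime φ N x s - u)]⟩

lemma continuousOn_stopTime {φ : FlowRn n} {K N L L' : Set (Fin n → ℝ)}
    (hN : IsolatingBlock φ K N L L') :
    ContinuousOn (fun p : (Fin n → ℝ) × ℝ => stopTime φ N p.1 p.2) (N ×ˢ Ici 0) := by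
  rintro ⟨x₀, s₀⟩ ⟨hx₀, hs₀⟩
  have hx₀ : x₀ ∈ N := hx₀
  have hs₀ : 0 ≤ s₀ := hs₀
  obtain ⟨hT0, hTs, -, hTL⟩ := stopTime_spec hN hx₀ hs₀
  have hmem : ∀ᶠ p : (Fin n → ℝ) × ℝ in nhdsWithin (x₀, s₀) (N ×ˢ Ici 0), p ∈ N ×ˢ Ici (0 : ℝ) :=
    self_mem_nhdsWithin
  refine tendsto_order.2 ⟨fun a ha => ?_, fun a ha => ?_⟩
  · have ha : a < stopTime φ N x₀ s₀ := ha
    rcases lt_or_ge a 0 with ha0 | ha0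
    · filter_upwards [hmem] with p hp
      exact ha0.trans_le (stopTime_spec hN hp.1 hp.2).1
    obtain ⟨b, hab, hb⟩ := exists_between ha
    have hb1 : ∀ᶠ p : (Fin n → ℝ) × ℝ in nhds (x₀, s₀), ∀ u ∈ Icc 0 b, φ.toFun p.1 u ∉ L := by
      refine isCompact_Icc.eventually_forall_of_forall_eventually fun u hu => ?_
      have hc : Continuous fun z : ((Fin n → ℝ) × ℝ) × ℝ => φ.toFun z.1.1 z.2 :=
        φ.continuous_toFun.comp
          (by fun_prop : Continuous fun z : ((Fin n → ℝ) × ℝ) × ℝ => (z.1.1, z.2))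
      exact (hc.tendsto ((x₀, s₀), u)).eventually
        (hN.compact_L.isClosed.isOpen_compl.mem_nhds (notMem_exit_of_lt_stopTime hN hx₀ hs₀ hu.1
          (hu.2.trans_lt hb)))
    have hb2 : ∀ᶠ p : (Fin n → ℝ) × ℝ in nhds (x₀, s₀), b < p.2 :=
      continuous_snd.continuousAt.eventually (lt_mem_nhds (hb.trans_le hTs))
    filter_upwards [hmem, nhdsWithin_le_nhds hb1, nhdsWithin_le_nhds hb2] with p hp h1 h2
    by_contra hle
    have hle : stopTime φ N p.1 p.2 ≤ a := not_lt.1 hle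
    obtain ⟨h3, -, -, h4⟩ := stopTime_spec hN hp.1 hp.2
    exact h1 _ ⟨h3, hle.trans hab.le⟩ (h4 (by linarith))
  · have ha : stopTime φ N x₀ s₀ < a := ha
    rcases lt_or_ge s₀ a with has | has
    · have h2 : ∀ᶠ p : (Fin n → ℝ) × ℝ in nhds (x₀, s₀), p.2 < a :=
        continuous_snd.continuousAt.eventually (gt_mem_nhds has)
      filter_upwards [hmem, nhdsWithin_le_nhds h2] with p hp h2
      exact (stopTime_spec hN hp.1 hp.2).2.1.trans_lt h2
    obtain ⟨δ, hδ, h⟩ := hN.exit_strict _ (hTL (ha.trans_le has))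
    obtain ⟨η, hη0, hη⟩ := exists_between
      (lt_min hδ (by linarith : 0 < a - stopTime φ N x₀ s₀))
    have hout := h η ⟨hη0, (hη.trans_le (min_le_left _ _)).le⟩
    rw [φ.map_add] at hout
    have hηa := hη.trans_le (min_le_right _ _)
    set t := stopTime φ N x₀ s₀ + η with ht
    have h1 : ∀ᶠ p : (Fin n → ℝ) × ℝ in nhds (x₀, s₀), φ.toFun p.1 t ∉ N :=
      (((φ.continuous_space t).comp continuous_fst).tendsto (x₀, s₀)).eventually
        (hN.compact_N.isClosed.isOpen_compl.mem_nhds hout)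
    filter_upwards [hmem, nhdsWithin_le_nhds h1] with p hp h1
    by_contra hle
    have hle : a ≤ stopTime φ N p.1 p.2 := not_lt.1 hle
    exact h1 ((stopTime_spec hN hp.1 hp.2).2.2.1 t ⟨by linarith, by linarith⟩)

lemma continuousOn_flowMap {φ : FlowRn n} {K N L L' : Set (Fin n → ℝ)}
    (hN : IsolatingBlock φ K N L L') :
    ContinuousOn (fun p : (Fin n → ℝ) × ℝ => flowMap φ N p.2 p.1) (N ×ˢ Ici 0) := by
  simp only [flowMap_eq]
  exact φ.continuous_toFun.comp_continuousOn
    (continuousOn_fst.prodMk (continuousOn_stopTime hN))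

/-- If an open set `V` contains `N⁻`, the points of `N ∖ V` leave `N` in backward time within a
uniform bound. -/
lemma exists_backward_exit {φ : FlowRn n} {N V : Set (Fin n → ℝ)} (hNc : IsCompact N)
    (hV : IsOpen V) (hsub : negAsymptotic φ N ⊆ V) :
    ∃ s₀ > (0 : ℝ), ∀ y ∈ N, (∀ t ∈ Icc (-s₀) 0, φ.toFun y t ∈ N) → y ∈ V := by
  let C : ℕ → Set (Fin n → ℝ) := fun k =>
    (N \ V) ∩ ⋂ t ∈ Icc (-(k : ℝ)) 0, {y | φ.toFun y t ∈ N}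
  have hcompact : IsCompact (N \ V) := hNc.diff hV
  have hclosed : ∀ k : ℕ, IsClosed (⋂ t ∈ Icc (-(k : ℝ)) 0, {y | φ.toFun y t ∈ N}) := fun k =>
    isClosed_biInter fun t _ => hNc.isClosed.preimage (φ.continuous_space t)
  have hanti : ∀ k, C (k + 1) ⊆ C k := by
    rintro k y ⟨hy, hy'⟩
    refine ⟨hy, mem_iInter₂.2 fun t ht => mem_iInter₂.1 hy' t ⟨?_, ht.2⟩⟩
    push_cast
    linarith [ht.1]
  have hex : ∃ k, C k = ∅ := by
    by_contra hne
    push Not at hne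
    obtain ⟨y, hy⟩ := IsCompact.nonempty_iInter_of_sequence_nonempty_isCompact_isClosed C hanti hne
      (hcompact.inter_right (hclosed 0)) fun k => hcompact.isClosed.inter (hclosed k)
    rw [mem_iInter] at hy
    refine (hy 0).1.2 (hsub ⟨(hy 0).1.1, fun t ht => ?_⟩)
    obtain ⟨k, hk⟩ := exists_nat_ge (-t)
    exact mem_iInter₂.1 (hy k).2 t ⟨by linarith, ht⟩
  obtain ⟨k, hk⟩ := hex
  refine ⟨k + 1, by positivity, fun y hy h => ?_⟩
  by_contra hyV
  have : y ∈ C k := ⟨⟨hy, hyV⟩, mem_iInter₂.2 fun t ht => h t ⟨by linarith [ht.1], ht.2⟩⟩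
  rw [hk] at this
  exact this

lemma flowMap_of_mem_exit {φ : FlowRn n} {K N L L' : Set (Fin n → ℝ)}
    (hN : IsolatingBlock φ K N L L') {x : Fin n → ℝ} (hx : x ∈ L) {s : ℝ} (hs : 0 ≤ s) :
    flowMap φ N s x = x := by
  have hxN : x ∈ N := hN.compact_N.isClosed.frontier_subset (hN.exit_subset hx)
  have h0 : stopTime φ N x s = 0 := by
    refine le_antisymm ?_ (stopTime_spec hN hxN hs).1
    by_contra h
    refine notMem_exit_of_lt_stopTime hN hxN hs le_rfl (not_le.1 h) ?_
    rwa [φ.map_zero]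
  rw [flowMap_eq, h0, φ.map_zero]

/-- For every set `U` open in `N` with `N⁻ ∪ L ⊆ U` there is `s₀ > 0` such
that for all `s' ≥ s ≥ s₀` one has `f_s (N) ⊆ U` and there is a homotopy in `U` from `f_s`
to `f_{s'}` keeping every point of `L` fixed. -/
theorem flowMap_homotopic_in_U (φ : FlowRn n) (K N L L' : Set (Fin n → ℝ))
    (hN : IsolatingBlock φ K N L L') :
    ∀ U : Set (Fin n → ℝ), (∃ V : Set (Fin n → ℝ), IsOpen V ∧ U = N ∩ V) →
      negAsymptotic φ N ∪ L ⊆ U →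
    ∃ s₀ > (0 : ℝ), ∀ s s' : ℝ, s₀ ≤ s → s ≤ s' →
      flowMap φ N s '' N ⊆ U ∧
      ∃ H : (Fin n → ℝ) × ℝ → (Fin n → ℝ),
        ContinuousOn H (N ×ˢ Icc (0 : ℝ) 1) ∧
        (∀ x ∈ N, ∀ u ∈ Icc (0 : ℝ) 1, H (x, u) ∈ U) ∧
        (∀ x ∈ N, H (x, 0) = flowMap φ N s x) ∧
        (∀ x ∈ N, H (x, 1) = flowMap φ N s' x) ∧
        (∀ x ∈ L, ∀ u ∈ Icc (0 : ℝ) 1, H (x, u) = x) := by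
  rintro U ⟨V, hV, rfl⟩ hU
  obtain ⟨s₀, hs₀, hback⟩ := exists_backward_exit hN.compact_N hV
    (fun x hx => (hU (Or.inl hx)).2)
  have hmaps : ∀ s, s₀ ≤ s → ∀ x ∈ N, flowMap φ N s x ∈ N ∩ V := by
    intro s hs x hx
    obtain ⟨h0, h1, h2, h3⟩ := stopTime_spec hN hx (hs₀.le.trans hs)
    rw [flowMap_eq]
    rcases h1.lt_or_eq with h | h
    · exact hU (Or.inr (h3 h))
    · rw [h] at h2 ⊢
      have hs0 : 0 ≤ s := hs₀.le.trans hs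
      refine ⟨h2 s ⟨hs0, le_rfl⟩, hback _ (h2 s ⟨hs0, le_rfl⟩) fun t ht => ?_⟩
      rw [φ.map_add]
      exact h2 _ ⟨by linarith [ht.1], by linarith [ht.2]⟩
  refine ⟨s₀, hs₀, fun s s' hs hss' => ⟨?_, ?_⟩⟩
  · rintro _ ⟨x, hx, rfl⟩
    exact hmaps s hs x hx
  have hle : ∀ u ∈ Icc (0 : ℝ) 1, s₀ ≤ s + u * (s' - s) := fun u hu =>
    hs.trans (le_add_of_nonneg_right (mul_nonneg hu.1 (sub_nonneg.2 hss')))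
  refine ⟨fun p => flowMap φ N (s + p.2 * (s' - s)) p.1, ?_, ?_, ?_, ?_, ?_⟩
  · refine (continuousOn_flowMap hN).comp
      (f := fun p : (Fin n → ℝ) × ℝ => (p.1, s + p.2 * (s' - s))) (by fun_prop) ?_
    rintro ⟨x, u⟩ ⟨hx, hu⟩
    exact ⟨hx, hs₀.le.trans (hle u hu)⟩
  · exact fun x hx u hu => hmaps _ (hle u hu) x hx
  · intro x _
    simp
  · intro x _
    simp
  · exact fun x hx u hu => flowMap_of_mem_exit hN hx (hs₀.le.trans (hle u hu))
end

section
/- Let φ be a flow on ℝⁿ and let N be an isolating block for K with exit set L, and set n⁻ = N⁻ ∩ L. Then: (i) N⁻ is compact and every x ∈ N⁻ has ω*(x) nonempty and contained in K; (ii) N⁻ ∖ K = {y(-t) : y ∈ n⁻, t ≥ 0}, and this representation is unique: every x ∈ N⁻ ∖ K lies in N ∖ N⁺, satisfies x·τ(x) ∈ n⁻, and x = y(-t) with y ∈ n⁻ and t ≥ 0 holds exactly for y = x·τ(x) and t = τ(x). In particular n⁻ is a section of N⁻ ∖ K carried into K in backward time, i.e., ω*(n⁻) ⊆ K. -/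
/-!
`N⁻` is an intersection of closed conditions inside the compact set `N`. For `x ∈ N⁻` the backward
orbit stays in `N`, so it has a cluster point, and `ω*(x)` is an invariant subset of `N`, hence
lies in `K` by maximality.

If `x ∈ N⁻ ∖ K`, then `x ∉ N⁺`, since otherwise the full orbit of `x` would be an invariant subset
of `N`, hence of `K`. So the set of `t ≥ 0` with `x[0,t] ⊆ N` is bounded; it is closed, and its
supremum `τ(x)` is attained. The point `x τ(x)` lies in `N⁻`. It must lie in `L`, for from an interior
point or from a point of `∂N ∖ L` the orbit could be continued inside `N` for a positive time.
Conversely, if `x = y(-t)` with `y ∈ n⁻` and `t ≥ 0`, the orbit of `x` stays in `N` on `[0,t]` and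
leaves `N` immediately after time `t`, because points of `L` exit strictly; hence `t = τ(x)`.
-/

open Set

variable {n : ℕ}

/-- The omega-limit `ω (x) = ⋂_{t ≥ 0} cl (x [t, ∞))`. -/
def omegaLim (φ : FlowRn n) (x : Fin n → ℝ) : Set (Fin n → ℝ) :=
  ⋂ t ∈ Ici (0 : ℝ), closure (φ.toFun x '' Ici t)

/-- The negative omega-limit `ω* (x) = ⋂_{t ≤ 0} cl (x (-∞, t])`. -/
def omegaStar (φ : FlowRn n) (x : Fin n → ℝ) : Set (Fin n → ℝ) :=
  ⋂ t ∈ Iic (0 : ℝ), closure (φ.toFun x '' Iic t)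

theorem FlowRn.continuous_time_s6 (φ : FlowRn n) (x : Fin n → ℝ) : Continuous (φ.toFun x) :=
  φ.continuous_toFun.comp (Continuous.prodMk continuous_const continuous_id)

theorem FlowRn.continuous_space_s6 (φ : FlowRn n) (t : ℝ) : Continuous fun x => φ.toFun x t :=
  φ.continuous_toFun.comp (Continuous.prodMk continuous_id continuous_const)

theorem negAsymptotic_flow (φ : FlowRn n) {N : Set (Fin n → ℝ)} {x : Fin n → ℝ}
    (hx : x ∈ negAsymptotic φ N) {t : ℝ} (ht : t ≤ 0) : φ.toFun x t ∈ negAsymptotic φ N := by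
  refine ⟨hx.2 t ht, fun s hs => ?_⟩
  rw [φ.map_add]
  exact hx.2 _ (by linarith)

theorem isCompact_negAsymptotic (φ : FlowRn n) {N : Set (Fin n → ℝ)} (hN : IsCompact N) :
    IsCompact (negAsymptotic φ N) := by
  have h : negAsymptotic φ N = N ∩ ⋂ t ∈ Iic (0 : ℝ), (fun x => φ.toFun x t) ⁻¹' N := by
    ext x
    simp [negAsymptotic]
  rw [h]
  exact hN.inter_right <| isClosed_biInter fun t _ =>
    hN.isClosed.preimage (φ.continuous_space_s6 t)

theorem isInvariant_omegaStar (φ : FlowRn n) (x : Fin n → ℝ) :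
    φ.IsInvariant (omegaStar φ x) := by
  intro p hp s
  simp only [omegaStar, mem_iInter, mem_Iic] at hp ⊢
  intro t ht
  -- Flowing by `s` sends `x(-∞, min 0 (t - s)]` into `x(-∞, t]`.
  have h := hp (min 0 (t - s)) (min_le_left _ _)
  refine map_mem_closure (f := fun y => φ.toFun y s) (φ.continuous_space_s6 s) h ?_
  rintro _ ⟨u, hu, rfl⟩
  have hu' : u ≤ t - s := le_trans hu (min_le_right _ _)
  exact ⟨u + s, by simp only [mem_Iic]; linarith, (φ.map_add x u s).symm⟩

theorem omegaStar_subset_of_mem_negAsymptotic (φ : FlowRn n) {N : Set (Fin n → ℝ)}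
    (hN : IsClosed N) {x : Fin n → ℝ} (hx : x ∈ negAsymptotic φ N) : omegaStar φ x ⊆ N := by
  intro p hp
  simp only [omegaStar, mem_iInter, mem_Iic] at hp
  refine closure_minimal ?_ hN (hp 0 le_rfl)
  rintro _ ⟨u, hu, rfl⟩
  exact hx.2 u hu

theorem omegaStar_nonempty (φ : FlowRn n) {N : Set (Fin n → ℝ)} (hN : IsCompact N)
    {x : Fin n → ℝ} (hx : x ∈ negAsymptotic φ N) : (omegaStar φ x).Nonempty := by
  have hle : Filter.map (φ.toFun x) Filter.atBot ≤ Filter.principal N := by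
    rw [Filter.le_principal_iff, Filter.mem_map]
    exact Filter.mem_of_superset (Filter.Iic_mem_atBot 0) fun t ht => hx.2 t ht
  obtain ⟨p, -, hp⟩ := hN hle
  refine ⟨p, ?_⟩
  simp only [omegaStar, mem_iInter]
  intro t _
  exact hp.mem_closure_of_mem _ (Filter.image_mem_map (Filter.Iic_mem_atBot t))

/-- A point whose whole orbit stays in `N` lies in `K`, since the orbit is invariant. -/
theorem IsolatingBlock.mem_of_orbit {φ : FlowRn n} {K N L L' : Set (Fin n → ℝ)}
    (hN : IsolatingBlock φ K N L L') {x : Fin n → ℝ} (hx : ∀ t, φ.toFun x t ∈ N) : x ∈ K := by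
  refine hN.maximal (range (φ.toFun x)) ?_ ?_ ⟨0, φ.map_zero x⟩
  · rintro _ ⟨t, rfl⟩
    exact hx t
  · rintro _ ⟨t, rfl⟩ s
    exact ⟨t + s, (φ.map_add x t s).symm⟩

/-- The orbit can be continued inside `N` for a positive time from every point of `N ∖ L`. -/
theorem IsolatingBlock.exists_stay {φ : FlowRn n} {K N L L' : Set (Fin n → ℝ)}
    (hN : IsolatingBlock φ K N L L') {y : Fin n → ℝ} (hy : y ∈ N) (hyL : y ∉ L) :
    ∃ δ > (0 : ℝ), ∀ t ∈ Ioc (0 : ℝ) δ, φ.toFun y t ∈ N := by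
  by_cases hi : y ∈ interior N
  · have hmem : φ.toFun y ⁻¹' interior N ∈ nhds (0 : ℝ) := by
      refine (φ.continuous_time_s6 y).continuousAt.preimage_mem_nhds ?_
      rw [φ.map_zero]
      exact isOpen_interior.mem_nhds hi
    obtain ⟨ε, hε, hb⟩ := Metric.mem_nhds_iff.1 hmem
    refine ⟨ε / 2, by linarith, fun t ht => interior_subset (hb ?_)⟩
    rw [Metric.mem_ball, Real.dist_eq, sub_zero, abs_of_pos ht.1]
    linarith [ht.2]
  · obtain ⟨δ, hδ, h⟩ := hN.enter_to_interior y ⟨⟨subset_closure hy, hi⟩, hyL⟩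
    exact ⟨δ, hδ, fun t ht => interior_subset (h t ht)⟩

theorem IsolatingBlock.notMem_posAsymptotic {φ : FlowRn n} {K N L L' : Set (Fin n → ℝ)}
    (hN : IsolatingBlock φ K N L L') {x : Fin n → ℝ} (hx : x ∈ negAsymptotic φ N \ K) :
    x ∉ posAsymptotic φ N := fun h =>
  hx.2 <| hN.mem_of_orbit fun t => (le_total t 0).elim (hx.1.2 t) (h.2 t)

/-- The supremum defining the exit time of a point of `N ∖ N⁺` is attained. -/
theorem exitTime_mem (φ : FlowRn n) {N : Set (Fin n → ℝ)} (hN : IsClosed N)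
    {x : Fin n → ℝ} (hx : x ∈ N \ posAsymptotic φ N) :
    IsGreatest {t : ℝ | 0 ≤ t ∧ ∀ u ∈ Icc 0 t, φ.toFun x u ∈ N} (exitTime φ N x) := by
  have hne : {t : ℝ | 0 ≤ t ∧ ∀ u ∈ Icc 0 t, φ.toFun x u ∈ N}.Nonempty := by
    refine ⟨0, le_rfl, fun u hu => ?_⟩
    rw [le_antisymm hu.2 hu.1, φ.map_zero]
    exact hx.1
  have hbdd : BddAbove {t : ℝ | 0 ≤ t ∧ ∀ u ∈ Icc 0 t, φ.toFun x u ∈ N} := by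
    obtain ⟨T, hT0, hT⟩ : ∃ T ≥ (0 : ℝ), φ.toFun x T ∉ N := by
      by_contra! h
      exact hx.2 ⟨hx.1, h⟩
    refine ⟨T, fun t ht => ?_⟩
    by_contra! h
    exact hT (ht.2 T ⟨hT0, h.le⟩)
  have hlub := isLUB_csSup hne hbdd
  refine ⟨⟨?_, ?_⟩, hlub.1⟩
  · obtain ⟨t, ht⟩ := hne
    exact ht.1.trans (hlub.1 ht)
  · -- The orbit is in `N` on `[0, τ)`, and `N` is closed, which settles the time `τ` itself.
    have hlt : ∀ u, 0 ≤ u → u < exitTime φ N x → φ.toFun x u ∈ N := by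
      intro u hu0 hu
      obtain ⟨t, ht, hut⟩ := exists_lt_of_lt_csSup hne hu
      exact ht.2 u ⟨hu0, hut.le⟩
    intro u hu
    rcases hu.2.lt_or_eq with h | rfl
    · exact hlt u hu.1 h
    · rcases hu.1.lt_or_eq with h0 | h0
      · refine closure_minimal (s := φ.toFun x '' Ico 0 (exitTime φ N x)) ?_ hN ?_
        · rintro _ ⟨v, hv, rfl⟩
          exact hlt v hv.1 hv.2
        · refine image_closure_subset_closure_image (φ.continuous_time_s6 x) ⟨_, ?_, rfl⟩
          rw [closure_Ico h0.ne]
          exact right_mem_Icc.2 h0.le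
      · rw [← h0, φ.map_zero]
        exact hx.1

theorem IsolatingBlock.flow_exitTime_mem {φ : FlowRn n} {K N L L' : Set (Fin n → ℝ)}
    (hN : IsolatingBlock φ K N L L') {x : Fin n → ℝ} (hx : x ∈ negAsymptotic φ N \ K) :
    0 ≤ exitTime φ N x ∧ φ.toFun x (exitTime φ N x) ∈ negAsymptotic φ N ∩ L := by
  obtain ⟨⟨h0, hin⟩, hub⟩ :=
    exitTime_mem φ hN.compact_N.isClosed ⟨hx.1.1, hN.notMem_posAsymptotic hx⟩
  have hle : ∀ u ≤ exitTime φ N x, φ.toFun x u ∈ N := fun u hu =>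
    (le_total u 0).elim (hx.1.2 u) fun h => hin u ⟨h, hu⟩
  refine ⟨h0, ⟨hle _ le_rfl, fun t ht => ?_⟩, ?_⟩
  · rw [φ.map_add]
    exact hle _ (by linarith)
  · by_contra hL
    obtain ⟨δ, hδ, hstay⟩ := hN.exists_stay (hle _ le_rfl) hL
    have : exitTime φ N x + δ ≤ exitTime φ N x := by
      refine hub ⟨by linarith, fun u hu => ?_⟩
      rcases le_or_gt u (exitTime φ N x) with h | h
      · exact hle u h
      · have := hstay (u - exitTime φ N x) ⟨by linarith, by linarith [hu.2]⟩
        rwa [φ.map_add, add_sub_cancel] at this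
    linarith

/-- The exit time of `y(-t)` is `t` when `y ∈ n⁻` and `t ≥ 0`. -/
theorem IsolatingBlock.exitTime_flow_neg {φ : FlowRn n} {K N L L' : Set (Fin n → ℝ)}
    (hN : IsolatingBlock φ K N L L') {y : Fin n → ℝ} (hy : y ∈ negAsymptotic φ N ∩ L)
    {t : ℝ} (ht : 0 ≤ t) : exitTime φ N (φ.toFun y (-t)) = t := by
  refine IsGreatest.csSup_eq ⟨⟨ht, fun u hu => ?_⟩, ?_⟩
  · rw [φ.map_add]
    exact hy.1.2 _ (by linarith [hu.2])
  · rintro s ⟨-, hs⟩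
    by_contra! hts
    obtain ⟨δ, hδ, hout⟩ := hN.exit_strict y hy.2
    have hpos : 0 < min (s - t) δ := lt_min (by linarith) hδ
    have h1 : min (s - t) δ ≤ s - t := min_le_left _ _
    have h2 := hs (t + min (s - t) δ) ⟨by linarith, by linarith⟩
    rw [φ.map_add, neg_add_cancel_left] at h2
    exact hout _ ⟨hpos, min_le_right _ _⟩ h2

/-- (i) `N⁻` is compact and every `x ∈ N⁻` has `ω*(x)` nonempty and
contained in `K`; (ii) `N⁻ ∖ K = {y (-t) : y ∈ n⁻, t ≥ 0}` where `n⁻ = N⁻ ∩ L`, and the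
representation is unique: every `x ∈ N⁻ ∖ K` lies in `N ∖ N⁺`, satisfies `x τ(x) ∈ n⁻`,
and `x = y (-t)` with `y ∈ n⁻`, `t ≥ 0` forces `y = x τ(x)` and `t = τ(x)`. In particular
`ω* (n⁻) ⊆ K`. -/
theorem negAsymptotic_structure (φ : FlowRn n) (K N L L' : Set (Fin n → ℝ))
    (hN : IsolatingBlock φ K N L L') :
    IsCompact (negAsymptotic φ N) ∧
    (∀ x ∈ negAsymptotic φ N, (omegaStar φ x).Nonempty ∧ omegaStar φ x ⊆ K) ∧
    negAsymptotic φ N \ K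
      = {z | ∃ y ∈ negAsymptotic φ N ∩ L, ∃ t ≥ (0 : ℝ), z = φ.toFun y (-t)} ∧
    (∀ x ∈ negAsymptotic φ N \ K,
      x ∈ N \ posAsymptotic φ N ∧
      φ.toFun x (exitTime φ N x) ∈ negAsymptotic φ N ∩ L ∧
      (∀ y ∈ negAsymptotic φ N ∩ L, ∀ t ≥ (0 : ℝ), x = φ.toFun y (-t) →
        y = φ.toFun x (exitTime φ N x) ∧ t = exitTime φ N x)) ∧
    (∀ y ∈ negAsymptotic φ N ∩ L, omegaStar φ y ⊆ K) := by
  have hω : ∀ x ∈ negAsymptotic φ N, omegaStar φ x ⊆ K := fun x hx =>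
    hN.maximal _ (omegaStar_subset_of_mem_negAsymptotic φ hN.compact_N.isClosed hx)
      (isInvariant_omegaStar φ x)
  refine ⟨isCompact_negAsymptotic φ hN.compact_N,
    fun x hx => ⟨omegaStar_nonempty φ hN.compact_N hx, hω x hx⟩, ?_, ?_, fun y hy => hω y hy.1⟩
  · ext z
    constructor
    · intro hz
      obtain ⟨h0, hmem⟩ := hN.flow_exitTime_mem hz
      refine ⟨_, hmem, _, h0, ?_⟩
      rw [φ.map_add, add_neg_cancel, φ.map_zero]
    · rintro ⟨y, hy, t, ht, rfl⟩
      refine ⟨negAsymptotic_flow φ hy.1 (by linarith), fun hK => ?_⟩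
      -- `K` is invariant, so `y ∈ K ⊆ int N`, while `y ∈ L ⊆ ∂N`.
      have h := hN.invariant_K _ hK t
      rw [φ.map_add, neg_add_cancel, φ.map_zero] at h
      exact (hN.exit_subset hy.2).2 (hN.subset_interior h)
  · intro x hx
    refine ⟨⟨hx.1.1, hN.notMem_posAsymptotic hx⟩, (hN.flow_exitTime_mem hx).2, ?_⟩
    rintro y hy t ht rfl
    rw [hN.exitTime_flow_neg hy ht, φ.map_add, neg_add_cancel, φ.map_zero]
    exact ⟨rfl, rfl⟩
end
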